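/- Fix a real number x₀ > 0. Every function f : ℂ → ℂ meromorphic on ℂ satisfying the functional equation f(α) = x₀·f(α−1) + Γ(α) for every α ∈ ℂ at which f(α), f(α−1), and Γ(α) are all analytic, is differentially transcendental. -/

import Mathlib

/-- A function `f : ℂ → ℂ` (meromorphic on `ℂ`) is differentially algebraic over `ℂ(z)`:
there are `n ∈ ℕ` and a nonzero polynomial `P ∈ ℂ[X₀, …, X_{n+1}]` such that
`P (z, f z, f' z, …, f⁽ⁿ⁾ z) = 0` at every point `z` where `f` is analytic. -/
def DifferentiallyAlgebraic (f : ℂ → ℂ) : Prop :=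
  ∃ (n : ℕ) (P : MvPolynomial (Fin (n + 2)) ℂ),
    P ≠ 0 ∧ ∀ z : ℂ, AnalyticAt ℂ f z →
      MvPolynomial.eval
        (fun i : Fin (n + 2) => if i.val = 0 then z else iteratedDeriv (i.val - 1) f z) P = 0

/-!
If `f` is differentially algebraic, then so are its Taylor series at `w` and at `w - 1`, hence by
the functional equation the Taylor series at `w` of `Γ` and of the digamma function `ψ = Γ' / Γ`.
But the derivatives of `ψ` are algebraically independent. They satisfy
`ψ⁽ⁱ⁾(z + 1) - ψ⁽ⁱ⁾(z) = (-1) ^ i * i! / z ^ (i + 1)`, and a minimal algebraic relation between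
solutions `y i` of difference equations `τ (y i) = y i + b i` is `τ`-invariant; differentiating it
yields constants `c i`, not all zero, such that `∑ c i * b i` telescopes as `g - τ g`.
For `b i = (-1) ^ i * i! / z ^ (i + 1)` the left side has its only pole at `0`, whereas the poles of
`g(z) - g(z + 1)` with `g` rational cannot consist of a single point.
-/

section DifferentialAlgebra

open Algebra Polynomial

theorem exists_aeval_eq_zero_and_aeval_derivative_ne_zero {A B : Type*} [CommRing A]
    [NoZeroDivisors A] [CharZero A] [Ring B] [Algebra A B] [FaithfulSMul A B] {b : B}
    (hb : IsAlgebraic A b) : ∃ p : A[X], aeval b p = 0 ∧ aeval b (derivative p) ≠ 0 := by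
  obtain ⟨p, hp, hpb⟩ := hb
  induction hd : p.natDegree using Nat.strong_induction_on generalizing p with
  | _ d ih =>
    by_cases hder : aeval b (derivative p) = 0
    · have hdeg : p.natDegree ≠ 0 := fun h0 ↦ by
        rw [eq_C_of_natDegree_eq_zero h0, aeval_C,
          map_eq_zero_iff _ (FaithfulSMul.algebraMap_injective A B)] at hpb
        exact hp (by rw [eq_C_of_natDegree_eq_zero h0, hpb, map_zero])
      exact ih _ (hd ▸ natDegree_derivative_lt hdeg) (derivative p)
        (fun h ↦ hdeg (derivative_eq_zero.mp h)) hder rfl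
    · exact ⟨p, hpb, hder⟩

theorem derivation_aeval_subalgebra {k R : Type*} [CommRing k] [CommRing R] [Algebra k R]
    (D : Derivation k R R) (A : Subalgebra k R) (b : R) (q : A[X]) :
    D (aeval b q) = q.sum (fun n a ↦ D a * b ^ n) + aeval b (derivative q) * D b := by
  induction q using Polynomial.induction_on' with
  | add p q hp hq =>
    rw [map_add, map_add, hp, hq, map_add, map_add,
      sum_add_index _ _ _ (by simp) (by simp [add_mul])]
    ring
  | monomial n a =>
    rw [sum_monomial_index _ _ (by simp), derivative_monomial, aeval_monomial, aeval_monomial,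
      Derivation.leibniz, Derivation.leibniz_pow]
    simp only [map_mul, map_natCast, smul_eq_mul, nsmul_eq_mul, Subalgebra.algebraMap_def,
      Algebra.algebraMap_self_apply]
    ring

variable {k R : Type*} [Field k] [CommRing R] [IsDomain R] [Algebra k R]

theorem algebraicIndependent_nat_of_transcendental {v : ℕ → R}
    (h : ∀ m, Transcendental (adjoin k (v '' Set.Iio m)) (v m)) : AlgebraicIndependent k v := by
  have hIio (n : ℕ) : AlgebraicIndepOn k v (Set.Iio n) := by
    induction n with
    | zero =>
      have : IsEmpty (Set.Iio 0 : Set ℕ) := ⟨fun x ↦ Nat.not_lt_zero _ x.2⟩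
      exact algebraicIndependent_empty_type_iff.mpr (FaithfulSMul.algebraMap_injective k R)
    | succ n ih => simpa [← Order.Iio_succ] using ih.insert (h n)
  refine algebraicIndependent_of_finite_type fun t ht ↦ ?_
  obtain ⟨n, hn⟩ := ht.bddAbove
  exact (hIio (n + 1)).mono fun i hi ↦ Nat.lt_succ_of_le (hn hi)

theorem not_algebraicIndependent_of_isAlgebraic_adjoin {s : Set R} (hs : s.Finite)
    {ι : Type*} [Infinite ι] {y : ι → R} (hy : ∀ i, IsAlgebraic (adjoin k s) (y i)) :
    ¬ AlgebraicIndependent k y := by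
  intro hind
  have hsub : Set.range y ⊆ (AlgebraicIndependent.matroid k R).closure s := by
    rw [AlgebraicIndependent.matroid_closure_eq]
    exact Set.range_subset_iff.mpr hy
  have hle : (Set.range y).encard ≤ s.encard :=
    calc (Set.range y).encard
        ≤ (AlgebraicIndependent.matroid k R).eRk ((AlgebraicIndependent.matroid k R).closure s) :=
          Matroid.Indep.encard_le_eRk_of_subset (M := AlgebraicIndependent.matroid k R)
            hind.to_subtype_range hsub
      _ ≤ s.encard := (Matroid.eRk_closure_eq _ s).trans_le (Matroid.eRk_le_encard _ s)
  exact Set.infinite_range_of_injective hind.injective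
    (Set.encard_lt_top_iff.mp (hle.trans_lt (Set.encard_lt_top_iff.mpr hs)))

theorem isAlgebraic_adjoin_of_subset {s t : Set R} (hst : s ⊆ t) {a : R}
    (ha : IsAlgebraic (adjoin k s) a) : IsAlgebraic (adjoin k t) a :=
  ha.adjoin_of_forall_isAlgebraic fun _ hx ↦ (hx.2 (hst hx.1)).elim

variable (D : Derivation k R R)

theorem derivation_eq_zero_of_isAlgebraic [CharZero k] {a : R} (ha : IsAlgebraic k a) :
    D a = 0 := by
  obtain ⟨p, hp, hder⟩ := exists_aeval_eq_zero_and_aeval_derivative_ne_zero ha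
  have h := D.map_aeval p a
  rw [hp, map_zero, smul_eq_mul] at h
  exact (mul_eq_zero.mp h.symm).resolve_left hder

/-- The set `s` generates a `D`-stable algebraic closure: `D` maps `s`, and hence everything
algebraic over `k[s]`, to elements algebraic over `k[s]`. -/
def IsDiffStable (s : Set R) : Prop :=
  ∀ a ∈ s, IsAlgebraic (adjoin k s) (D a)

namespace IsDiffStable

variable {D} {s t : Set R}

theorem union (hs : IsDiffStable D s) (ht : IsDiffStable D t) : IsDiffStable D (s ∪ t) := by
  rintro a (ha | ha)
  · exact isAlgebraic_adjoin_of_subset Set.subset_union_left (hs a ha)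
  · exact isAlgebraic_adjoin_of_subset Set.subset_union_right (ht a ha)

theorem isAlgebraic_of_mem_adjoin (hs : IsDiffStable D s) {a : R} (ha : a ∈ adjoin k s) :
    IsAlgebraic (adjoin k s) (D a) := by
  have of_mem {x : R} (hx : x ∈ adjoin k s) : IsAlgebraic (adjoin k s) x :=
    isAlgebraic_algebraMap (⟨x, hx⟩ : adjoin k s)
  induction ha using adjoin_induction with
  | mem x hx => exact hs x hx
  | algebraMap r => simpa using isAlgebraic_zero
  | add x y _ _ hDx hDy => exact (map_add D x y).symm ▸ hDx.add hDy
  | mul x y hx hy hDx hDy =>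
    rw [Derivation.leibniz, smul_eq_mul, smul_eq_mul]
    exact ((of_mem hx).mul hDy).add ((of_mem hy).mul hDx)

-- Differentiating `p(b) = 0` gives `p'(b) * D b = -pᴰ(b)`, where `pᴰ` has coefficients `D aᵢ`.
theorem isAlgebraic [CharZero k] (hs : IsDiffStable D s) {b : R} (hb : IsAlgebraic (adjoin k s) b) :
    IsAlgebraic (adjoin k s) (D b) := by
  have : CharZero (adjoin k s) :=
    charZero_of_injective_algebraMap (algebraMap k (adjoin k s)).injective
  obtain ⟨p, hp, hder⟩ := exists_aeval_eq_zero_and_aeval_derivative_ne_zero hb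
  have hcoeff : IsAlgebraic (adjoin k s) (p.sum fun n a ↦ D a * b ^ n) :=
    (Subalgebra.algebraicClosure (adjoin k s) R).sum_mem fun n _ ↦
      (hs.isAlgebraic_of_mem_adjoin (p.coeff n).2).mul (hb.pow n)
  have hDb : aeval b (derivative p) * D b = -p.sum fun n a ↦ D a * b ^ n := by
    have h := derivation_aeval_subalgebra D (adjoin k s) b p
    rw [hp, map_zero] at h
    linear_combination -h
  have hder_alg : IsAlgebraic (adjoin k s) (aeval b (derivative p)) :=
    adjoin_le (S := Subalgebra.algebraicClosure (adjoin k s) R)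
      (Set.singleton_subset_iff.mpr hb) (aeval_mem_adjoin_singleton _ b)
  exact hder_alg.of_mul (mem_nonZeroDivisors_of_ne_zero hder) (hDb ▸ hcoeff.neg)

theorem isAlgebraic_iterate [CharZero k] (hs : IsDiffStable D s) {b : R}
    (hb : IsAlgebraic (adjoin k s) b) (n : ℕ) : IsAlgebraic (adjoin k s) (D^[n] b) := by
  induction n with
  | zero => exact hb
  | succ n ih => exact Function.iterate_succ_apply' D n b ▸ hs.isAlgebraic ih

end IsDiffStable

/-- The subalgebra of elements of `R` that are differentially algebraic over `k`, encoded as the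
elements algebraic over `k[s]` for some finite `D`-stable set `s`; equivalently, those whose
derivatives of all orders generate an algebra of finite transcendence degree. -/
def diffAlgebraicClosure : Subalgebra k R where
  carrier := {a | ∃ s : Set R, s.Finite ∧ IsDiffStable D s ∧ IsAlgebraic (adjoin k s) a}
  algebraMap_mem' c := ⟨∅, Set.finite_empty, fun _ ha ↦ ha.elim,
    isAlgebraic_algebraMap (algebraMap k _ c)⟩
  add_mem' := by
    rintro a b ⟨s, hs, hDs, ha⟩ ⟨t, ht, hDt, hb⟩
    exact ⟨s ∪ t, hs.union ht, hDs.union hDt,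
      (isAlgebraic_adjoin_of_subset Set.subset_union_left ha).add
        (isAlgebraic_adjoin_of_subset Set.subset_union_right hb)⟩
  mul_mem' := by
    rintro a b ⟨s, hs, hDs, ha⟩ ⟨t, ht, hDt, hb⟩
    exact ⟨s ∪ t, hs.union ht, hDs.union hDt,
      (isAlgebraic_adjoin_of_subset Set.subset_union_left ha).mul
        (isAlgebraic_adjoin_of_subset Set.subset_union_right hb)⟩

variable {D} {a b : R}

theorem mem_diffAlgebraicClosure_of_mul_mem (ha₀ : a ≠ 0) (ha : a ∈ diffAlgebraicClosure D)
    (hab : a * b ∈ diffAlgebraicClosure D) : b ∈ diffAlgebraicClosure D := by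
  obtain ⟨s, hs, hDs, ha⟩ := ha
  obtain ⟨t, ht, hDt, hab⟩ := hab
  exact ⟨s ∪ t, hs.union ht, hDs.union hDt,
    (isAlgebraic_adjoin_of_subset Set.subset_union_left ha).of_mul
      (mem_nonZeroDivisors_of_ne_zero ha₀)
      (isAlgebraic_adjoin_of_subset Set.subset_union_right hab)⟩

variable [CharZero k]

theorem derivation_mem_diffAlgebraicClosure (ha : a ∈ diffAlgebraicClosure D) :
    D a ∈ diffAlgebraicClosure D := by
  obtain ⟨s, hs, hDs, ha⟩ := ha
  exact ⟨s, hs, hDs, hDs.isAlgebraic ha⟩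

theorem not_algebraicIndependent_iterate_of_mem_diffAlgebraicClosure
    (ha : a ∈ diffAlgebraicClosure D) : ¬ AlgebraicIndependent k fun n : ℕ ↦ D^[n] a := by
  obtain ⟨s, hs, hDs, ha⟩ := ha
  exact not_algebraicIndependent_of_isAlgebraic_adjoin hs (hDs.isAlgebraic_iterate ha)

theorem mem_diffAlgebraicClosure_of_not_algebraicIndependent {t : R} (ht : D t = 1)
    (h : ¬ AlgebraicIndependent k fun i : ℕ ↦ if i = 0 then t else D^[i - 1] a) :
    a ∈ diffAlgebraicClosure D := by
  set v : ℕ → R := fun i ↦ if i = 0 then t else D^[i - 1] a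
  obtain ⟨m, hm⟩ : ∃ m, IsAlgebraic (adjoin k (v '' Set.Iio m)) (v m) := by
    by_contra! hv
    exact h (algebraicIndependent_nat_of_transcendental hv)
  have hm₀ : m ≠ 0 := by
    rintro rfl
    rw [show v '' Set.Iio 0 = ∅ by simp, adjoin_empty] at hm
    have hDt := derivation_eq_zero_of_isAlgebraic D (Subalgebra.isAlgebraic_of_isAlgebraic_bot hm)
    exact one_ne_zero (ht.symm.trans hDt)
  have hle {i : ℕ} (hi : i ≤ m) : IsAlgebraic (adjoin k (v '' Set.Iio m)) (v i) := by
    rcases hi.lt_or_eq with hlt | rfl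
    · exact isAlgebraic_algebraMap
        (⟨v i, subset_adjoin (Set.mem_image_of_mem v hlt)⟩ : adjoin k (v '' Set.Iio m))
    · exact hm
  refine ⟨v '' Set.Iio m, (Set.finite_Iio m).image v, ?_, hle (Nat.pos_of_ne_zero hm₀)⟩
  rintro _ ⟨i, hi, rfl⟩
  rcases i with _ | i
  · exact ht ▸ isAlgebraic_one
  · have hDv : D (v (i + 1)) = v (i + 2) := (Function.iterate_succ_apply' D i a).symm
    exact hDv ▸ hle (Nat.succ_le_of_lt hi)

end DifferentialAlgebra

section TaylorSeries

open Filter Topology PowerSeries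

variable {𝕜 : Type*} [NontriviallyNormedField 𝕜]

/-- The formal Taylor series of `f` at `w`. It turns identities between germs of analytic
functions into identities in the differential ring `𝕜⟦X⟧`. -/
noncomputable def taylorSeries (w : 𝕜) (f : 𝕜 → 𝕜) : 𝕜⟦X⟧ :=
  PowerSeries.mk fun n ↦ iteratedDeriv n f w / n.factorial

variable {w : 𝕜} {f g : 𝕜 → 𝕜}

theorem coeff_taylorSeries (n : ℕ) :
    coeff n (taylorSeries w f) = iteratedDeriv n f w / n.factorial :=
  coeff_mk _ _

theorem taylorSeries_congr (h : f =ᶠ[𝓝 w] g) : taylorSeries w f = taylorSeries w g := by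
  ext n
  rw [coeff_taylorSeries, coeff_taylorSeries, h.iteratedDeriv_eq n]

theorem taylorSeries_const (w c : 𝕜) : taylorSeries w (fun _ ↦ c) = algebraMap 𝕜 𝕜⟦X⟧ c := by
  ext n
  rw [coeff_taylorSeries, iteratedDeriv_const, PowerSeries.algebraMap_apply,
    Algebra.algebraMap_self_apply, coeff_C]
  split_ifs with h <;> simp [h]

theorem taylorSeries_id (w : 𝕜) : taylorSeries w (fun z ↦ z) = X + C w := by
  ext n
  rcases n with _ | _ | n <;> simp [coeff_taylorSeries, iteratedDeriv_fun_id, coeff_X]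

theorem taylorSeries_comp_sub_const (w c : 𝕜) (f : 𝕜 → 𝕜) :
    taylorSeries w (fun z ↦ f (z - c)) = taylorSeries (w - c) f := by
  ext n
  rw [coeff_taylorSeries, coeff_taylorSeries, iteratedDeriv_comp_sub_const]

section CharZero

variable [CharZero 𝕜]

theorem taylorSeries_deriv (w : 𝕜) (f : 𝕜 → 𝕜) :
    taylorSeries w (deriv f) = derivative 𝕜 (taylorSeries w f) := by
  ext n
  rw [coeff_derivative, coeff_taylorSeries, coeff_taylorSeries, ← iteratedDeriv_succ',
    Nat.factorial_succ]
  have hfac : (n.factorial : 𝕜) ≠ 0 := Nat.cast_ne_zero.mpr n.factorial_ne_zero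
  have hsucc : (n : 𝕜) + 1 ≠ 0 := Nat.cast_add_one_ne_zero n
  push_cast
  field_simp

theorem taylorSeries_iteratedDeriv (w : 𝕜) (f : 𝕜 → 𝕜) (n : ℕ) :
    taylorSeries w (iteratedDeriv n f) = (derivative 𝕜)^[n] (taylorSeries w f) := by
  induction n with
  | zero => rw [iteratedDeriv_zero, Function.iterate_zero_apply]
  | succ n ih => rw [iteratedDeriv_succ, taylorSeries_deriv, ih, Function.iterate_succ_apply']

end CharZero

variable [CompleteSpace 𝕜]

theorem taylorSeries_add (hf : AnalyticAt 𝕜 f w) (hg : AnalyticAt 𝕜 g w) :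
    taylorSeries w (fun z ↦ f z + g z) = taylorSeries w f + taylorSeries w g := by
  ext n
  rw [map_add, coeff_taylorSeries, coeff_taylorSeries, coeff_taylorSeries,
    iteratedDeriv_fun_add hf.contDiffAt hg.contDiffAt, add_div]

variable [CharZero 𝕜]

theorem taylorSeries_mul (hf : AnalyticAt 𝕜 f w) (hg : AnalyticAt 𝕜 g w) :
    taylorSeries w (fun z ↦ f z * g z) = taylorSeries w f * taylorSeries w g := by
  ext n
  rw [coeff_mul, Finset.Nat.sum_antidiagonal_eq_sum_range_succ_mk, coeff_taylorSeries,
    iteratedDeriv_fun_mul hf.contDiffAt hg.contDiffAt, Finset.sum_div]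
  refine Finset.sum_congr rfl fun i hi ↦ ?_
  have hfac (m : ℕ) : (m.factorial : 𝕜) ≠ 0 := Nat.cast_ne_zero.mpr m.factorial_ne_zero
  rw [coeff_taylorSeries, coeff_taylorSeries,
    Nat.cast_choose 𝕜 (Nat.lt_succ_iff.mp (Finset.mem_range.mp hi))]
  have hn := hfac n
  have hi := hfac i
  have hni := hfac (n - i)
  field_simp

theorem taylorSeries_mvPolynomial_eval {σ : Type*} {y : σ → 𝕜 → 𝕜}
    (hy : ∀ i, AnalyticAt 𝕜 (y i) w) (P : MvPolynomial σ 𝕜) :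
    taylorSeries w (fun z ↦ MvPolynomial.eval (fun i ↦ y i z) P) =
      MvPolynomial.aeval (fun i ↦ taylorSeries w (y i)) P := by
  have hP (P : MvPolynomial σ 𝕜) : AnalyticAt 𝕜 (fun z ↦ MvPolynomial.eval (fun i ↦ y i z) P) w :=
    .aeval_mvPolynomial hy P
  induction P using MvPolynomial.induction_on with
  | C a => simp only [MvPolynomial.eval_C, MvPolynomial.aeval_C, taylorSeries_const]
  | add p q hp hq => simp only [map_add, taylorSeries_add (hP p) (hP q), hp, hq]
  | mul_X p i hp =>
    simp only [map_mul, MvPolynomial.eval_X, MvPolynomial.aeval_X,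
      taylorSeries_mul (hP p) (hy i), hp]

theorem taylorSeries_eq_zero_iff (hf : AnalyticAt 𝕜 f w) :
    taylorSeries w f = 0 ↔ ∀ᶠ z in 𝓝 w, f z = 0 := by
  refine ⟨fun h ↦ ?_, fun h ↦ ?_⟩
  · have hderiv (n : ℕ) : iteratedDeriv n f w = 0 := by
      simpa [coeff_taylorSeries, n.factorial_ne_zero] using congrArg (coeff n) h
    rw [← analyticOrderAt_eq_top, ENat.eq_top_iff_forall_ge]
    exact fun n ↦ (natCast_le_analyticOrderAt_iff_iteratedDeriv_eq_zero hf).mpr fun i _ ↦ hderiv i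
  · rw [taylorSeries_congr h]
    exact (taylorSeries_const w 0).trans (map_zero _)

theorem DifferentiallyAlgebraic.taylorSeries_mem_diffAlgebraicClosure {f : ℂ → ℂ}
    (hda : DifferentiallyAlgebraic f) {w : ℂ} (hf : AnalyticAt ℂ f w) :
    taylorSeries w f ∈ diffAlgebraicClosure (derivative ℂ) := by
  obtain ⟨n, P, hP₀, hP⟩ := hda
  have hX : derivative ℂ (taylorSeries w fun z ↦ z) = 1 := by simp [taylorSeries_id]
  refine mem_diffAlgebraicClosure_of_not_algebraicIndependent hX fun hind ↦ hP₀ ?_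
  let y (i : Fin (n + 2)) : ℂ → ℂ :=
    if i.val = 0 then fun z ↦ z else iteratedDeriv (i.val - 1) f
  have hy (i : Fin (n + 2)) : AnalyticAt ℂ (y i) w := by
    simp only [y, iteratedDeriv_eq_iterate]
    split_ifs
    exacts [analyticAt_id, hf.iterated_deriv _]
  have htaylor : (fun i ↦ taylorSeries w (y i)) =
      (fun i : ℕ ↦ if i = 0 then taylorSeries w (fun z ↦ z)
        else (derivative ℂ)^[i - 1] (taylorSeries w f)) ∘ Fin.val := by
    ext1 i
    simp only [y, Function.comp_apply, ← taylorSeries_iteratedDeriv]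
    split_ifs <;> rfl
  have hPy : taylorSeries w (fun z ↦ MvPolynomial.eval (fun i ↦ y i z) P) = 0 := by
    refine (taylorSeries_eq_zero_iff (.aeval_mvPolynomial hy P)).mpr ?_
    filter_upwards [hf.eventually_analyticAt] with z hz
    rw [MvPolynomial.aeval_eq_eval]
    simpa only [y, ite_apply] using hP z hz
  rw [taylorSeries_mvPolynomial_eval hy, htaylor] at hPy
  exact algebraicIndependent_iff.mp (hind.comp Fin.val Fin.val_injective) P hPy

end TaylorSeries

section DifferenceEquations

open MvPolynomial

variable {σ R : Type*}

theorem totalDegree_pderiv_lt [CommSemiring R] {Q : MvPolynomial σ R} {i : σ} (h : pderiv i Q ≠ 0) :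
    (pderiv i Q).totalDegree < Q.totalDegree := by
  refine (Finset.sup_lt_iff (Nat.pos_of_ne_zero fun h₀ ↦ h ?_)).mpr fun m hm ↦ ?_
  · rw [totalDegree_eq_zero_iff_eq_C.mp h₀, pderiv_C]
  · rw [mem_support_iff, coeff_pderiv] at hm
    have hle : (m + Finsupp.single i 1).degree ≤ Q.totalDegree :=
      le_totalDegree (mem_support_iff.mpr (left_ne_zero_of_mul hm))
    rw [map_add, Finsupp.degree_single] at hle
    exact hle

theorem eq_C_of_forall_pderiv_eq_zero [CommSemiring R] [NoZeroDivisors R] [CharZero R]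
    {Q : MvPolynomial σ R} (h : ∀ i, pderiv i Q = 0) : Q = C (coeff 0 Q) := by
  classical
  ext m
  rw [coeff_C]
  split_ifs with hm
  · rw [hm]
  · obtain ⟨i, hi⟩ := Finsupp.ne_iff.mp (Ne.symm hm)
    have hle : Finsupp.single i 1 ≤ m := Finsupp.single_le_iff.mpr (Nat.one_le_iff_ne_zero.mpr hi)
    have hcoeff := congrArg (coeff (m - Finsupp.single i 1)) (h i)
    rw [coeff_pderiv, tsub_add_cancel_of_le hle, coeff_zero] at hcoeff
    exact (mul_eq_zero.mp hcoeff).resolve_right (Nat.cast_add_one_ne_zero _)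

theorem pderiv_sum_C_mul_X [CommSemiring R] (c : σ →₀ R) (j : σ) :
    pderiv j (c.sum fun i a ↦ C a * X i) = C (c j) := by
  classical
  have hterm (i : σ) : pderiv j (C (c i) * X i) = if i = j then C (c i) else 0 := by
    rw [pderiv_C_mul, pderiv_X, Pi.single_apply]
    split_ifs with h <;> simp
  rw [Finsupp.sum, map_sum, Finset.sum_congr rfl fun i _ ↦ hterm i, Finset.sum_ite_eq']
  split_ifs with hj
  · rfl
  · rw [Finsupp.notMem_support_iff.mp hj, map_zero]

theorem exists_eq_C_add_sum_of_pderiv_eq_C [CommRing R] [NoZeroDivisors R] [CharZero R]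
    {Q : MvPolynomial σ R} (h : ∀ i, ∃ a, pderiv i Q = C a) :
    ∃ (g : R) (c : σ →₀ R), Q = C g + c.sum fun i a ↦ C a * X i := by
  choose a ha using h
  have hvars (i : σ) (hi : a i ≠ 0) : i ∈ Q.vars := by
    by_contra hnot
    exact hi (C_injective σ R (by rw [← ha, pderiv_eq_zero_of_notMem_vars hnot, map_zero]))
  let c : σ →₀ R := Finsupp.onFinset Q.vars a hvars
  have hconst := eq_C_of_forall_pderiv_eq_zero (Q := Q - c.sum fun i a ↦ C a * X i)
    fun j ↦ by rw [map_sub, ha, pderiv_sum_C_mul_X, Finsupp.onFinset_apply, sub_self]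
  exact ⟨_, c, sub_eq_iff_eq_add.mp hconst⟩

theorem exists_monic_mem_forall_degree_le {K : Type*} [Field K] (ord : MonomialOrder σ)
    {I : Ideal (MvPolynomial σ K)} (hI : I ≠ ⊥) :
    ∃ Q ∈ I, ord.Monic Q ∧
      ∀ P ∈ I, P ≠ 0 → ord.toSyn (ord.degree Q) ≤ ord.toSyn (ord.degree P) := by
  obtain ⟨P, ⟨hPI, hP₀⟩, hmin⟩ := WellFounded.has_min
    (InvImage.wf (fun P : MvPolynomial σ K ↦ ord.toSyn (ord.degree P)) wellFounded_lt)
    {P | P ∈ I ∧ P ≠ 0} (Submodule.exists_mem_ne_zero_of_ne_bot hI)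
  have hlc : ord.leadingCoeff P ≠ 0 := ord.leadingCoeff_ne_zero_iff.mpr hP₀
  have hdeg : ord.degree ((ord.leadingCoeff P)⁻¹ • P) = ord.degree P :=
    ord.degree_smul_of_isRegular (IsRegular.of_ne_zero (inv_ne_zero hlc))
  refine ⟨(ord.leadingCoeff P)⁻¹ • P, I.smul_of_tower_mem _ hPI, ?_, fun P' hP'I hP'₀ ↦ ?_⟩
  · rw [MonomialOrder.Monic, MonomialOrder.leadingCoeff, hdeg, coeff_smul]
    exact inv_mul_cancel₀ hlc
  · exact hdeg ▸ not_lt.mp (hmin P' ⟨hP'I, hP'₀⟩)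

variable [CommRing R]

/-- The `τ`-semilinear endomorphism `X i ↦ X i + b i` of `R[X]`. It is the universal model for the
action of a difference operator on solutions `y` of the equations `τ (y i) = y i + b i`. -/
noncomputable def affineShift (τ : R →+* R) (b : σ → R) :
    MvPolynomial σ R →+* MvPolynomial σ R :=
  eval₂Hom (C.comp τ) fun i ↦ X i + C (b i)

namespace affineShift

variable (τ : R →+* R) (b : σ → R)

theorem apply_C (a : R) : affineShift τ b (C a) = C (τ a) :=
  eval₂Hom_C _ _ a

theorem apply_X (i : σ) : affineShift τ b (X i) = X i + C (b i) :=
  eval₂Hom_X' _ _ i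

theorem coeff_monomial_of_degree_le [IsDomain R] {s m : σ →₀ ℕ} (hsm : s.degree ≤ m.degree)
    (a : R) :
    coeff m (affineShift τ b (monomial s a)) = τ (coeff m (monomial s a)) := by
  classical
  refine induction_on_monomial (motive := fun p ↦ ∀ m : σ →₀ ℕ, p.totalDegree ≤ m.degree →
    coeff m (affineShift τ b p) = τ (coeff m p)) (fun a m _ ↦ ?_) (fun p i hp m hm ↦ ?_) s a m
    ((totalDegree_monomial_le s a).trans hsm)
  · rw [apply_C, coeff_C, coeff_C, apply_ite τ, map_zero]
  · rcases eq_or_ne p 0 with rfl | hp₀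
    · simp
    rw [totalDegree_mul_of_isDomain hp₀ (X_ne_zero i), totalDegree_X] at hm
    rw [map_mul, apply_X, mul_add, coeff_add, mul_comm _ (C (b i)), coeff_C_mul, hp m (by lia),
      coeff_eq_zero_of_totalDegree_lt (f := p) (d := m) hm, coeff_mul_X', coeff_mul_X']
    split_ifs with hi
    · have hle : Finsupp.single i 1 ≤ m :=
        Finsupp.single_le_iff.mpr (Nat.one_le_iff_ne_zero.mpr (Finsupp.mem_support_iff.mp hi))
      have hdeg := congrArg Finsupp.degree (tsub_add_cancel_of_le hle)
      rw [map_add, Finsupp.degree_single] at hdeg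
      rw [hp _ (by lia), map_zero, mul_zero, add_zero]
    · simp

theorem coeff_of_totalDegree_le [IsDomain R] {P : MvPolynomial σ R} {m : σ →₀ ℕ}
    (hm : P.totalDegree ≤ m.degree) : coeff m (affineShift τ b P) = τ (coeff m P) := by
  conv_lhs => rw [P.as_sum]
  conv_rhs => rw [P.as_sum]
  rw [map_sum, coeff_sum, coeff_sum, map_sum]
  exact Finset.sum_congr rfl fun s hs ↦
    coeff_monomial_of_degree_le τ b ((le_totalDegree hs).trans hm) _

theorem pderiv_apply (i : σ) (P : MvPolynomial σ R) :
    pderiv i (affineShift τ b P) = affineShift τ b (pderiv i P) := by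
  classical
  induction P using MvPolynomial.induction_on with
  | C a => simp only [apply_C, pderiv_C, map_zero]
  | add p q hp hq => simp only [map_add, hp, hq]
  | mul_X p j hp =>
    have hX : pderiv i (X j) = affineShift τ b (pderiv i (X j : MvPolynomial σ R)) := by
      rw [pderiv_X, Pi.single_apply]
      split_ifs <;> simp
    simp only [map_mul, Derivation.leibniz, smul_eq_mul, hp, apply_X, map_add, pderiv_C, add_zero,
      ← hX]

theorem aeval_apply {M : Type*} [CommRing M] [Algebra R M] {τM : M →+* M}
    (hτ : ∀ a, τM (algebraMap R M a) = algebraMap R M (τ a)) {y : σ → M}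
    (hy : ∀ i, τM (y i) = y i + algebraMap R M (b i)) (P : MvPolynomial σ R) :
    aeval y (affineShift τ b P) = τM (aeval y P) := by
  induction P using MvPolynomial.induction_on with
  | C a => simp only [apply_C, aeval_C, hτ]
  | add p q hp hq => simp only [map_add, hp, hq]
  | mul_X p i hp => simp only [map_mul, hp, apply_X, map_add, aeval_X, aeval_C, hy]

variable {τ b}

theorem exists_fixed_pderiv_eq_C {Q : MvPolynomial σ R} (hQ : affineShift τ b Q = Q)
    (hQC : ∀ a, Q ≠ C a) :
    ∃ Q, affineShift τ b Q = Q ∧ (∀ a, Q ≠ C a) ∧ ∀ i, ∃ a, pderiv i Q = C a := by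
  induction hd : Q.totalDegree using Nat.strong_induction_on generalizing Q with
  | _ d ih =>
    by_cases hex : ∀ i, ∃ a, pderiv i Q = C a
    · exact ⟨Q, hQ, hQC, hex⟩
    · push Not at hex
      obtain ⟨i, hi⟩ := hex
      exact ih _ (hd ▸ totalDegree_pderiv_lt (by simpa using hi 0))
        (by rw [← pderiv_apply, hQ]) hi rfl

theorem exists_telescoping_of_fixed [NoZeroDivisors R] [CharZero R]
    {Q : MvPolynomial σ R} (hQ : affineShift τ b Q = Q) (hQC : ∀ a, Q ≠ C a) :
    ∃ c : σ →₀ R, c ≠ 0 ∧ (∀ i, τ (c i) = c i) ∧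
      ∃ g, Finsupp.linearCombination R b c = g - τ g := by
  obtain ⟨Q, hQ, hQC, hpd⟩ := exists_fixed_pderiv_eq_C hQ hQC
  obtain ⟨g, c, rfl⟩ := exists_eq_C_add_sum_of_pderiv_eq_C hpd
  have hpderiv (i : σ) : pderiv i (C g + c.sum fun i a ↦ C a * X i) = C (c i) := by
    rw [map_add, pderiv_C, zero_add, pderiv_sum_C_mul_X]
  have hc (i : σ) : τ (c i) = c i := C_injective σ R <| by
    rw [← apply_C τ b, ← hpderiv, ← pderiv_apply, hQ]
  refine ⟨c, ?_, hc, g, ?_⟩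
  · rintro rfl
    exact hQC g (by simp)
  · rw [map_add, Finsupp.sum, map_sum] at hQ
    simp only [map_mul, apply_C, apply_X, hc, mul_add, Finset.sum_add_distrib] at hQ
    apply C_injective σ R
    simp only [Finsupp.linearCombination_apply, Finsupp.sum, map_sub, map_sum, smul_eq_mul, map_mul]
    linear_combination hQ

theorem coeff_sub_self_of_monic [IsDomain R] [LinearOrder σ] [WellFoundedGT σ]
    {Q : MvPolynomial σ R} (hQ : MonomialOrder.degLex.Monic Q) {m : σ →₀ ℕ}
    (hm : MonomialOrder.degLex.toSyn (MonomialOrder.degLex.degree Q) ≤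
      MonomialOrder.degLex.toSyn m) :
    coeff m (affineShift τ b Q - Q) = 0 := by
  have hdeg : Q.totalDegree ≤ m.degree := by
    rw [← degree_degLexDegree]
    exact Finsupp.DegLex.monotone_degree hm
  rw [coeff_sub, coeff_of_totalDegree_le τ b hdeg]
  rcases hm.eq_or_lt with heq | hlt
  · rw [← MonomialOrder.degLex.toSyn.injective heq, hQ.coeff_degree, map_one, sub_self]
  · rw [MonomialOrder.degLex.coeff_eq_zero_of_lt hlt, map_zero, sub_self]

-- A monic element of least degree is fixed: its leading term cancels against that of its shift.
theorem exists_fixed_ne_C_of_le_comap {K : Type*} [Field K] {τ : K →+* K} {b : σ → K}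
    {I : Ideal (MvPolynomial σ K)} (hI : I ≤ I.comap (affineShift τ b)) (hbot : I ≠ ⊥)
    (htop : I ≠ ⊤) : ∃ Q, affineShift τ b Q = Q ∧ ∀ a, Q ≠ C a := by
  obtain ⟨_, _⟩ := exists_wellFoundedGT σ
  obtain ⟨Q, hQI, hmonic, hmin⟩ := exists_monic_mem_forall_degree_le MonomialOrder.degLex hbot
  refine ⟨Q, ?_, ?_⟩
  · by_contra hne
    have hne' := sub_ne_zero.mpr hne
    exact MonomialOrder.degLex.coeff_degree_ne_zero_iff.mpr hne'
      (coeff_sub_self_of_monic hmonic (hmin _ (I.sub_mem (hI hQI) hQI) hne'))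
  · rintro a rfl
    have ha : a ≠ 0 := by simpa using hmonic.ne_zero
    exact htop (I.eq_top_of_isUnit_mem hQI ((isUnit_iff_ne_zero.mpr ha).map C))

end affineShift

-- A difference analogue of the Kolchin–Ostrowski theorem on algebraic relations between integrals.
theorem algebraicIndependent_of_forall_linearCombination_ne {K M : Type*} [Field K] [CharZero K]
    [CommRing M] [Nontrivial M] [Algebra K M] {τ : K →+* K} {τM : M →+* M}
    (hτ : ∀ a, τM (algebraMap K M a) = algebraMap K M (τ a)) {b : σ → K} {y : σ → M}
    (hy : ∀ i, τM (y i) = y i + algebraMap K M (b i))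
    (h : ∀ c : σ →₀ K, c ≠ 0 → (∀ i, τ (c i) = c i) →
      ∀ g, Finsupp.linearCombination K b c ≠ g - τ g) :
    AlgebraicIndependent K y := by
  by_contra hdep
  have hstable : RingHom.ker (aeval y) ≤
      (RingHom.ker (aeval (R := K) y)).comap (affineShift τ b) := fun P hP ↦ by
    rw [RingHom.mem_ker] at hP
    rw [Ideal.mem_comap, RingHom.mem_ker, affineShift.aeval_apply τ b hτ hy, hP, map_zero]
  obtain ⟨Q, hQ, hQC⟩ := affineShift.exists_fixed_ne_C_of_le_comap hstable
    (fun hker ↦ hdep (algebraicIndependent_iff_ker_eq_bot.mpr hker)) (RingHom.ker_ne_top _)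
  obtain ⟨c, hc₀, hc, g, hg⟩ := affineShift.exists_telescoping_of_fixed hQ hQC
  exact h c hc₀ hc g hg

end DifferenceEquations

section RationalFunctions

open Polynomial Filter

variable {k : Type*} [Field k]

/-- The shift `g(X) ↦ g(X + 1)` of rational functions. -/
noncomputable def ratFuncShift (k : Type*) [Field k] : RatFunc k →+* RatFunc k :=
  RatFunc.mapRingHom (taylorAlgHom (1 : k))
    (nonZeroDivisors_le_comap_nonZeroDivisors_of_injective _ (taylor_injective 1))

theorem ratFuncShift_algebraMap (p : k[X]) :
    ratFuncShift k (algebraMap _ _ p) = algebraMap _ _ (taylor 1 p) := by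
  simp [ratFuncShift, RatFunc.coe_mapRingHom_eq_coe_map, RatFunc.map_apply]

theorem mul_denom_mul_taylor_denom_eq {g : RatFunc k} {u v : k[X]}
    (h : algebraMap _ _ u = algebraMap _ _ v * (g - ratFuncShift k g)) :
    u * (g.denom * taylor 1 g.denom) =
      v * (g.num * taylor 1 g.denom - taylor 1 g.num * g.denom) := by
  have hq : algebraMap k[X] (RatFunc k) g.denom ≠ 0 := RatFunc.algebraMap_ne_zero g.denom_ne_zero
  have hq' : algebraMap k[X] (RatFunc k) (taylor 1 g.denom) ≠ 0 := by
    simpa using g.denom_ne_zero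
  apply RatFunc.algebraMap_injective k
  rw [← g.num_div_denom, map_div₀, ratFuncShift_algebraMap, ratFuncShift_algebraMap] at h
  simp only [map_mul, map_sub, h]
  field_simp

theorem denom_dvd_mul_taylor_denom {g : RatFunc k} {u v : k[X]}
    (h : algebraMap _ _ u = algebraMap _ _ v * (g - ratFuncShift k g)) :
    g.denom ∣ v * taylor 1 g.denom :=
  g.isCoprime_num_denom.symm.dvd_of_dvd_mul_left
    ⟨u * taylor 1 g.denom + v * taylor 1 g.num,
      by linear_combination -mul_denom_mul_taylor_denom_eq h⟩

theorem taylor_denom_dvd_mul_denom {g : RatFunc k} {u v : k[X]}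
    (h : algebraMap _ _ u = algebraMap _ _ v * (g - ratFuncShift k g)) :
    taylor 1 g.denom ∣ v * g.denom :=
  (g.isCoprime_num_denom.map (taylorAlgHom (1 : k)).toRingHom).symm.dvd_of_dvd_mul_left
    ⟨v * g.num - u * g.denom, by
      simp only [AlgHom.toRingHom_eq_coe, RingHom.coe_coe, taylorAlgHom_apply]
      linear_combination mul_denom_mul_taylor_denom_eq h⟩

/-- The germ at infinity of the sequence of values of a polynomial at the natural numbers. -/
noncomputable def polynomialGerm (k : Type*) [Field k] : k[X] →+* Germ (atTop : Filter ℕ) k :=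
  (Germ.coeRingHom atTop).comp (RingHom.pi fun n : ℕ ↦ evalRingHom (n : k))

theorem polynomialGerm_apply (p : k[X]) :
    polynomialGerm k p = ((fun n : ℕ ↦ p.eval (n : k) : ℕ → k) : Germ atTop k) :=
  rfl

/-- The shift `y(n) ↦ y(n + 1)` of germs at infinity of sequences. -/
def germShift (k : Type*) [Field k] : Germ (atTop : Filter ℕ) k →+* Germ (atTop : Filter ℕ) k where
  toFun y := y.compTendsto (fun n ↦ n + 1) (tendsto_add_atTop_nat 1)
  map_one' := rfl
  map_zero' := rfl
  map_mul' y z := Germ.inductionOn₂ y z fun _ _ ↦ rfl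
  map_add' y z := Germ.inductionOn₂ y z fun _ _ ↦ rfl

theorem germShift_coe (y : ℕ → k) :
    germShift k (y : Germ atTop k) = ((fun n ↦ y (n + 1) : ℕ → k) : Germ atTop k) :=
  rfl

variable [CharZero k]

theorem eventually_eval_natCast_ne_zero {p : k[X]} (hp : p ≠ 0) :
    ∀ᶠ n : ℕ in atTop, p.eval (n : k) ≠ 0 := by
  rw [← Nat.cofinite_eq_atTop]
  exact ((p.finite_setOfPred_isRoot hp).preimage
    Nat.cast_injective.injOn).eventually_cofinite_notMem

theorem isUnit_polynomialGerm (p : nonZeroDivisors k[X]) : IsUnit (polynomialGerm k p) := by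
  refine .of_mul_eq_one (↑fun n : ℕ ↦ ((p : k[X]).eval (n : k))⁻¹) (Germ.coe_eq.mpr ?_)
  filter_upwards [eventually_eval_natCast_ne_zero (nonZeroDivisors.coe_ne_zero p)] with n hn
  exact mul_inv_cancel₀ hn

/-- The germ at infinity of the sequence of values of a rational function at the natural
numbers. -/
noncomputable def ratFuncGerm (k : Type*) [Field k] [CharZero k] :
    RatFunc k →+* Germ (atTop : Filter ℕ) k :=
  IsLocalization.lift isUnit_polynomialGerm

theorem ratFuncGerm_algebraMap (p : k[X]) :
    ratFuncGerm k (algebraMap _ _ p) = polynomialGerm k p :=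
  IsLocalization.lift_eq _ _

theorem ratFuncGerm_div {p q : k[X]} (hq : q ≠ 0) :
    ratFuncGerm k (algebraMap _ _ p / algebraMap _ _ q) =
      ((fun n : ℕ ↦ p.eval (n : k) / q.eval (n : k) : ℕ → k) : Germ atTop k) := by
  refine (isUnit_polynomialGerm ⟨q, mem_nonZeroDivisors_of_ne_zero hq⟩).mul_right_cancel ?_
  rw [← ratFuncGerm_algebraMap, ← map_mul,
    div_mul_cancel₀ _ (RatFunc.algebraMap_ne_zero hq), ratFuncGerm_algebraMap,
    ratFuncGerm_algebraMap]
  refine Germ.coe_eq.mpr ?_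
  filter_upwards [eventually_eval_natCast_ne_zero hq] with n hn
  exact (div_mul_cancel₀ _ hn).symm

theorem germShift_ratFuncGerm (g : RatFunc k) :
    germShift k (ratFuncGerm k g) = ratFuncGerm k (ratFuncShift k g) := by
  suffices (germShift k).comp (ratFuncGerm k) = (ratFuncGerm k).comp (ratFuncShift k) from
    congrArg (· g) this
  refine IsLocalization.ringHom_ext (nonZeroDivisors k[X]) (RingHom.ext fun p ↦ ?_)
  simp only [RingHom.comp_apply, ratFuncShift_algebraMap, ratFuncGerm_algebraMap,
    polynomialGerm_apply, germShift_coe, taylor_eval, Nat.cast_add_one]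

theorem exists_eq_C_of_ratFuncShift_eq {g : RatFunc k} (hg : ratFuncShift k g = g) :
    ∃ a, g = algebraMap k[X] (RatFunc k) (C a) := by
  obtain ⟨y, hy⟩ : ∃ y : ℕ → k, (y : Germ atTop k) = ratFuncGerm k g := Quotient.exists_rep _
  have hshift := germShift_ratFuncGerm g
  rw [hg, ← hy, germShift_coe, Germ.coe_eq] at hshift
  obtain ⟨N, hN⟩ := eventually_atTop.mp hshift
  refine ⟨y N, (ratFuncGerm k).injective ?_⟩
  rw [ratFuncGerm_algebraMap, polynomialGerm_apply, ← hy, Germ.coe_eq]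
  filter_upwards [eventually_ge_atTop N] with n hn
  induction n, hn using Nat.le_induction with
  | base => rw [eval_C]
  | succ n hn ih => exact (hN n hn).trans (ih.trans (by rw [eval_C, eval_C]))

theorem zero_notMem_of_finite_of_mem_iff {A : Set k} (hfin : A.Finite)
    (hA : ∀ a ≠ 0, a ∈ A ↔ a + 1 ∈ A) : 0 ∉ A := by
  intro h₀
  refine hfin.not_infinite (Set.infinite_of_injective_forall_mem (f := fun n : ℕ ↦ -(n : k))
    (fun m n h ↦ by simpa using h) fun n ↦ ?_)
  induction n with
  | zero => simpa using h₀
  | succ n ih =>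
    exact (hA _ (neg_ne_zero.mpr (Nat.cast_ne_zero.mpr n.succ_ne_zero))).mpr (by simpa using ih)

theorem one_notMem_of_finite_of_mem_iff {A : Set k} (hfin : A.Finite)
    (hA : ∀ a ≠ 0, a ∈ A ↔ a + 1 ∈ A) : 1 ∉ A := by
  intro h₁
  refine hfin.not_infinite (Set.infinite_of_injective_forall_mem (f := fun n : ℕ ↦ (n : k) + 1)
    (fun m n h ↦ by simpa using h) fun n ↦ ?_)
  induction n with
  | zero => simpa using h₁
  | succ n ih => simpa using (hA _ (Nat.cast_add_one_ne_zero n)).mp ih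

-- A pole of `g - g(X + 1)` at `0` would force a pole of `g` at `0` or at `1`, and then, as no other
-- point may compensate it, poles at all of `0, -1, -2, …` or all of `1, 2, 3, …`.
theorem algebraMap_ne_X_pow_mul_sub_ratFuncShift {u : k[X]} (hu : u.eval 0 ≠ 0) {m : ℕ}
    (hm : m ≠ 0) (g : RatFunc k) :
    algebraMap k[X] (RatFunc k) u ≠ algebraMap k[X] _ (X ^ m) * (g - ratFuncShift k g) := by
  intro h
  have hroot (a : k) (ha : a ≠ 0) : g.denom.IsRoot a ↔ g.denom.IsRoot (a + 1) := by
    have heval (p : k[X]) : (X ^ m * p).eval a = 0 ↔ p.eval a = 0 := by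
      simp [pow_ne_zero m ha]
    constructor <;> intro h₀
    · have := h₀.dvd (denom_dvd_mul_taylor_denom h)
      rwa [IsRoot, heval, taylor_eval] at this
    · have := IsRoot.dvd (x := a) (by rwa [IsRoot, taylor_eval]) (taylor_denom_dvd_mul_denom h)
      rwa [IsRoot, heval] at this
  have hfin := g.denom.finite_setOfPred_isRoot g.denom_ne_zero
  have h₀ := congrArg (eval 0) (mul_denom_mul_taylor_denom_eq h)
  simp only [eval_mul, eval_pow, eval_X, zero_pow hm, zero_mul, taylor_eval, zero_add,
    mul_eq_zero, hu, false_or] at h₀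
  rcases h₀ with h₀ | h₁
  · exact zero_notMem_of_finite_of_mem_iff hfin hroot h₀
  · exact one_notMem_of_finite_of_mem_iff hfin hroot h₁

theorem linearCombination_div_X_pow_ne_sub_ratFuncShift {u : ℕ → k} (hu : ∀ i, u i ≠ 0)
    {c : ℕ →₀ RatFunc k} (hc₀ : c ≠ 0) (hc : ∀ i, ratFuncShift k (c i) = c i) (g : RatFunc k) :
    Finsupp.linearCombination (RatFunc k)
      (fun i ↦ algebraMap k[X] (RatFunc k) (C (u i)) / algebraMap k[X] _ (X ^ (i + 1))) c ≠
      g - ratFuncShift k g := by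
  intro h
  choose a ha using fun i ↦ exists_eq_C_of_ratFuncShift_eq (hc i)
  let d := c.support.max' (Finsupp.support_nonempty_iff.mpr hc₀)
  have hd : d ∈ c.support := Finset.max'_mem _ _
  have had : a d ≠ 0 := fun h₀ ↦ Finsupp.mem_support_iff.mp hd (by rw [ha, h₀, map_zero, map_zero])
  let p : k[X] := ∑ i ∈ c.support, C (a i * u i) * X ^ (d - i)
  have hp : p.eval 0 = a d * u d := by
    rw [eval_finsetSum, Finset.sum_eq_single_of_mem d hd]
    · simp
    · intro i hi hid
      have hlt : i < d := lt_of_le_of_ne (Finset.le_max' _ i hi) hid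
      simp [(Nat.sub_pos_of_lt hlt).ne']
  refine algebraMap_ne_X_pow_mul_sub_ratFuncShift (u := p) (by simp [hp, had, hu])
    d.succ_ne_zero g ?_
  rw [← h, Finsupp.linearCombination_apply, Finsupp.sum, map_sum, Finset.mul_sum]
  refine Finset.sum_congr rfl fun i hi ↦ ?_
  have hX : algebraMap k[X] (RatFunc k) X ≠ 0 := RatFunc.algebraMap_ne_zero X_ne_zero
  have hsplit : d.succ = d - i + (i + 1) := by
    have := Finset.le_max' _ i hi
    lia
  rw [ha i, hsplit, pow_add]
  simp only [map_mul, map_pow, smul_eq_mul]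
  field_simp

theorem eval₂_ratFuncGerm_coe {σ : Type*} (y : σ → ℕ → k) (Q : MvPolynomial σ k) :
    Q.eval₂ ((ratFuncGerm k).comp ((algebraMap k[X] (RatFunc k)).comp C))
      (fun i ↦ (y i : Germ atTop k)) =
      ((fun n ↦ Q.eval fun i ↦ y i n : ℕ → k) : Germ atTop k) := by
  induction Q using MvPolynomial.induction_on with
  | C a =>
    simp only [MvPolynomial.eval₂_C, RingHom.comp_apply, ratFuncGerm_algebraMap,
      polynomialGerm_apply, eval_C, MvPolynomial.eval_C]
  | add p q hp hq =>
    simp only [MvPolynomial.eval₂_add, hp, hq, map_add]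
    rfl
  | mul_X p i hp =>
    simp only [MvPolynomial.eval₂_mul, MvPolynomial.eval₂_X, hp, map_mul, MvPolynomial.eval_X]
    rfl

theorem eq_zero_of_eventually_eval_eq_zero {u : ℕ → k} (hu : ∀ i, u i ≠ 0) {y : ℕ → ℕ → k}
    (hy : ∀ i, ∀ᶠ n : ℕ in atTop, y i (n + 1) = y i n + u i / (n : k) ^ (i + 1))
    {Q : MvPolynomial ℕ k} (hQ : ∀ᶠ n in atTop, Q.eval (fun i ↦ y i n) = 0) : Q = 0 := by
  let _ : Algebra (RatFunc k) (Germ (atTop : Filter ℕ) k) := (ratFuncGerm k).toAlgebra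
  have hind : AlgebraicIndependent (RatFunc k) fun i ↦ (y i : Germ (atTop : Filter ℕ) k) := by
    refine algebraicIndependent_of_forall_linearCombination_ne germShift_ratFuncGerm
      (b := fun i ↦ algebraMap k[X] (RatFunc k) (C (u i)) / algebraMap k[X] _ (X ^ (i + 1)))
      (fun i ↦ ?_) fun c hc₀ hc g ↦ linearCombination_div_X_pow_ne_sub_ratFuncShift hu hc₀ hc g
    rw [RingHom.algebraMap_toAlgebra, ratFuncGerm_div (pow_ne_zero _ X_ne_zero), germShift_coe]
    simp only [eval_C, eval_pow, eval_X]
    exact Germ.coe_eq.mpr (hy i)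
  have hinj := (algebraMap k[X] (RatFunc k)).comp C |>.injective
  refine MvPolynomial.map_injective _ hinj ?_
  rw [map_zero]
  refine algebraicIndependent_iff.mp hind _ ?_
  rw [MvPolynomial.aeval_def, MvPolynomial.eval₂_map, RingHom.algebraMap_toAlgebra,
    eval₂_ratFuncGerm_coe]
  exact Germ.coe_eq.mpr hQ

end RationalFunctions

section Digamma

open Complex Filter Topology PowerSeries

variable {z w : ℂ}

theorem analyticAt_Gamma (hz : ∀ m : ℕ, z ≠ -m) : AnalyticAt ℂ Gamma z := by
  simpa using (differentiable_one_div_Gamma.analyticAt z).fun_inv (inv_ne_zero (Gamma_ne_zero hz))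

theorem analyticAt_digamma (hz : ∀ m : ℕ, z ≠ -m) : AnalyticAt ℂ digamma z :=
  (analyticAt_Gamma hz).deriv.div (analyticAt_Gamma hz) (Gamma_ne_zero hz)

theorem analyticAt_iteratedDeriv_digamma (hz : ∀ m : ℕ, z ≠ -m) (n : ℕ) :
    AnalyticAt ℂ (iteratedDeriv n digamma) z := by
  rw [iteratedDeriv_eq_iterate]
  exact (analyticAt_digamma hz).iterated_deriv n

theorem eventually_ne_neg_natCast (hz : ∀ m : ℕ, z ≠ -m) : ∀ᶠ u : ℂ in 𝓝 z, ∀ m : ℕ, u ≠ -m := by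
  filter_upwards [(analyticAt_Gamma hz).continuousAt.eventually_ne (Gamma_ne_zero hz)] with u hu
  simpa [Gamma_eq_zero_iff] using hu

theorem isPreconnected_setOf_ne_neg_natCast : IsPreconnected {z : ℂ | ∀ m : ℕ, z ≠ -m} := by
  have hcompl : {z : ℂ | ∀ m : ℕ, z ≠ -m} = (Set.range fun m : ℕ ↦ (-m : ℂ))ᶜ := by
    ext z
    simp [eq_comm]
  rw [hcompl]
  exact ((Set.countable_range _).isConnected_compl_of_one_lt_rank
    (by simp [Complex.rank_real_complex])).isPreconnected

theorem iteratedDeriv_digamma_add_one (hz : ∀ m : ℕ, z ≠ -m) (n : ℕ) :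
    iteratedDeriv n digamma (z + 1) =
      iteratedDeriv n digamma z + (-1) ^ n * n.factorial / z ^ (n + 1) := by
  have hz₀ : z ≠ 0 := by simpa using hz 0
  have hrec : (fun u ↦ digamma (u + 1)) =ᶠ[𝓝 z] fun u ↦ digamma u + u⁻¹ := by
    filter_upwards [eventually_ne_neg_natCast hz] with u hu using digamma_apply_add_one u hu
  have hinv : iteratedDeriv n (fun u : ℂ ↦ u⁻¹) z = (-1) ^ n * n.factorial / z ^ (n + 1) := by
    rw [iteratedDeriv_eq_iterate, iter_deriv_inv, div_eq_mul_inv, ← zpow_natCast z, ← zpow_neg]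
    congr 2
    push_cast
    ring
  rw [← hinv, ← iteratedDeriv_fun_add (analyticAt_digamma hz).contDiffAt
    (analyticAt_inv hz₀).contDiffAt, ← hrec.iteratedDeriv_eq, iteratedDeriv_comp_add_const]

theorem algebraicIndependent_iterate_derivative_taylorSeries_digamma (hw : ∀ m : ℕ, w ≠ -m) :
    AlgebraicIndependent ℂ fun n : ℕ ↦ (derivative ℂ)^[n] (taylorSeries w digamma) := by
  refine algebraicIndependent_iff.mpr fun Q hQ ↦ ?_
  let F (z : ℂ) : ℂ := Q.eval fun n ↦ iteratedDeriv n digamma z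
  have hF : AnalyticOnNhd ℂ F {z | ∀ m : ℕ, z ≠ -m} := fun z hz ↦ by
    simpa only [MvPolynomial.aeval_eq_eval] using
      AnalyticAt.aeval_mvPolynomial (analyticAt_iteratedDeriv_digamma hz) Q
  have hlocal : ∀ᶠ z in 𝓝 w, F z = 0 := by
    rw [← taylorSeries_eq_zero_iff (hF w hw),
      taylorSeries_mvPolynomial_eval (analyticAt_iteratedDeriv_digamma hw)]
    simpa only [taylorSeries_iteratedDeriv] using hQ
  have hzero := hF.eqOn_zero_of_preconnected_of_eventuallyEq_zero
    isPreconnected_setOf_ne_neg_natCast hw hlocal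
  have hnat {n : ℕ} (hn : 0 < n) (m : ℕ) : (n : ℂ) ≠ -m := by
    rw [Ne, eq_neg_iff_add_eq_zero]
    exact_mod_cast (n.add_pos_left hn m).ne'
  refine eq_zero_of_eventually_eval_eq_zero (u := fun i ↦ (-1) ^ i * (i.factorial : ℂ))
    (y := fun i n ↦ iteratedDeriv i digamma n) (fun i ↦ by simp [Nat.factorial_ne_zero])
    (fun i ↦ ?_) ?_
  · filter_upwards [eventually_gt_atTop 0] with n hn
    simpa using iteratedDeriv_digamma_add_one (hnat hn) i
  · filter_upwards [eventually_gt_atTop 0] with n hn using hzero (hnat hn)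

theorem taylorSeries_Gamma_mul_taylorSeries_digamma (hw : ∀ m : ℕ, w ≠ -m) :
    taylorSeries w Gamma * taylorSeries w digamma = derivative ℂ (taylorSeries w Gamma) := by
  rw [← taylorSeries_mul (analyticAt_Gamma hw) (analyticAt_digamma hw), ← taylorSeries_deriv]
  refine taylorSeries_congr ?_
  filter_upwards [eventually_ne_neg_natCast hw] with z hz
  rw [digamma_def, logDeriv_apply, mul_div_cancel₀ _ (Gamma_ne_zero hz)]

theorem taylorSeries_Gamma_notMem_diffAlgebraicClosure (hw : ∀ m : ℕ, w ≠ -m) :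
    taylorSeries w Gamma ∉ diffAlgebraicClosure (derivative ℂ) := by
  intro hΓ
  have hΓ₀ : taylorSeries w Gamma ≠ 0 := fun h₀ ↦ Gamma_ne_zero hw
    ((taylorSeries_eq_zero_iff (analyticAt_Gamma hw)).mp h₀).self_of_nhds
  have hmul : taylorSeries w Gamma * taylorSeries w digamma ∈
      diffAlgebraicClosure (derivative ℂ) := by
    rw [taylorSeries_Gamma_mul_taylorSeries_digamma hw]
    exact derivation_mem_diffAlgebraicClosure hΓ
  exact not_algebraicIndependent_iterate_of_mem_diffAlgebraicClosure
    (mem_diffAlgebraicClosure_of_mul_mem hΓ₀ hΓ hmul)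
    (algebraicIndependent_iterate_derivative_taylorSeries_digamma hw)

end Digamma

section GautschiWaldvogel

open Complex Filter Topology

theorem not_differentiallyAlgebraic_of_eventuallyEq {f : ℂ → ℂ} {x₀ w : ℂ}
    (hw : ∀ m : ℕ, w ≠ -m) (hf : AnalyticAt ℂ f w) (hf' : AnalyticAt ℂ f (w - 1))
    (hfe : f =ᶠ[𝓝 w] fun z ↦ x₀ * f (z - 1) + Gamma z) : ¬DifferentiallyAlgebraic f := by
  intro hda
  have hshift : AnalyticAt ℂ (fun z ↦ f (z - 1)) w :=
    hf'.comp_of_eq (analyticAt_id.sub analyticAt_const) rfl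
  have htaylor := taylorSeries_congr hfe
  rw [taylorSeries_add (analyticAt_const.fun_mul hshift) (analyticAt_Gamma hw),
    taylorSeries_mul analyticAt_const hshift, taylorSeries_const,
    taylorSeries_comp_sub_const] at htaylor
  refine taylorSeries_Gamma_notMem_diffAlgebraicClosure hw ?_
  rw [← sub_eq_of_eq_add' htaylor]
  exact sub_mem (hda.taylorSeries_mem_diffAlgebraicClosure hf)
    (mul_mem (Subalgebra.algebraMap_mem _ x₀) (hda.taylorSeries_mem_diffAlgebraicClosure hf'))

theorem exists_analyticAt_and_analyticAt_sub_one {f : ℂ → ℂ} (hmero : MeromorphicOn f Set.univ) :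
    ∃ w : ℂ, (∀ m : ℕ, w ≠ -m) ∧ AnalyticAt ℂ f w ∧ AnalyticAt ℂ f (w - 1) := by
  have hne : ∀ᶠ z : ℂ in 𝓝[≠] 1, ∀ m : ℕ, z ≠ -m :=
    (eventually_ne_neg_natCast fun m h ↦ by
      simpa using Gamma_eq_zero_iff 1 |>.mpr ⟨m, h⟩).filter_mono nhdsWithin_le_nhds
  have hsub : Tendsto (fun z : ℂ ↦ z - 1) (𝓝[≠] 1) (𝓝[≠] (1 - 1)) :=
    ((hasDerivAt_id (1 : ℂ)).sub_const 1).tendsto_nhdsNE one_ne_zero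
  exact (hne.and ((hmero 1 trivial).eventually_analyticAt.and
    (hsub.eventually (hmero _ trivial).eventually_analyticAt))).exists

theorem gautschiWaldvogel_diffTranscendental_general {x₀ : ℂ} {f : ℂ → ℂ}
    (hmero : MeromorphicOn f Set.univ)
    (hfe : ∀ α : ℂ, AnalyticAt ℂ f α → AnalyticAt ℂ f (α - 1) →
      AnalyticAt ℂ Gamma α → f α = x₀ * f (α - 1) + Gamma α) :
    ¬DifferentiallyAlgebraic f := by
  obtain ⟨w, hw, hf, hf'⟩ := exists_analyticAt_and_analyticAt_sub_one hmero
  refine not_differentiallyAlgebraic_of_eventuallyEq (x₀ := x₀) hw hf hf' ?_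
  filter_upwards [hf.eventually_analyticAt, (continuous_sub_right 1).continuousAt.eventually
    hf'.eventually_analyticAt, (analyticAt_Gamma hw).eventually_analyticAt] with z hz hz' hΓ
  exact hfe z hz hz' hΓ

end GautschiWaldvogel

/-- Fix a real `x₀ > 0`. Every function meromorphic on ℂ satisfying the
Gautschi–Waldvogel functional equation `f α = x₀ * f (α-1) + Γ α` (wherever all three
terms are analytic) is differentially transcendental. -/
theorem gautschiWaldvogel_diffTranscendental (x₀ : ℝ) (hx₀ : 0 < x₀)
    (f : ℂ → ℂ) (hmero : MeromorphicOn f Set.univ)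
    (hfe : ∀ α : ℂ, AnalyticAt ℂ f α → AnalyticAt ℂ f (α - 1) →
      AnalyticAt ℂ Complex.Gamma α → f α = (x₀ : ℂ) * f (α - 1) + Complex.Gamma α) :
    ¬ DifferentiallyAlgebraic f :=
  gautschiWaldvogel_diffTranscendental_general hmero hfe
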